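/- (Eckart–Young, subspace form) Let A ∈ ℝ^{p×n} with compact SVD A = UΣV (singular values in descending order). Among all X ∈ ℝ^{r×n} with X X^T = I_r (r ≤ rank(A)), the minimum of ‖A − A X^T X‖_F² is attained at X = V_{1:r}, the top r right singular vectors. -/

import Mathlib

open Matrix Finset

/-- Squared Frobenius norm. -/
def frobSq {p n : ℕ} (M : Matrix (Fin p) (Fin n) ℝ) : ℝ := ∑ i, ∑ j, (M i j) ^ 2

theorem frobSq_eq_trace {p n : ℕ} (M : Matrix (Fin p) (Fin n) ℝ) :
    frobSq M = (M * Mᵀ).trace := by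
  simp [frobSq, Matrix.trace, Matrix.mul_apply, pow_two]

/-- Pythagoras for the projection onto the row space of a row-orthonormal matrix. -/
theorem frobSq_sub_proj {p n r : ℕ} (A : Matrix (Fin p) (Fin n) ℝ)
    (X : Matrix (Fin r) (Fin n) ℝ) (hX : X * Xᵀ = 1) :
    frobSq (A - A * Xᵀ * X) = frobSq A - frobSq (A * Xᵀ) := by
  have h : A * Xᵀ * X * (Xᵀ * (X * Aᵀ)) = A * Xᵀ * (X * Aᵀ) := by
    rw [Matrix.mul_assoc (A * Xᵀ), ← Matrix.mul_assoc X Xᵀ, hX, Matrix.one_mul]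
  rw [frobSq_eq_trace, frobSq_eq_trace, frobSq_eq_trace, ← Matrix.trace_sub]
  congr 1
  simp only [Matrix.transpose_sub, Matrix.transpose_mul, Matrix.transpose_transpose,
    Matrix.sub_mul, Matrix.mul_sub, h]
  simp only [Matrix.mul_assoc]
  abel

theorem frobSq_nonneg {p n : ℕ} (M : Matrix (Fin p) (Fin n) ℝ) : 0 ≤ frobSq M :=
  Finset.sum_nonneg fun _ _ => Finset.sum_nonneg fun _ _ => sq_nonneg _

theorem frobSq_transpose {p n : ℕ} (M : Matrix (Fin p) (Fin n) ℝ) : frobSq Mᵀ = frobSq M :=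
  Finset.sum_comm

/-- Bessel's inequality for a row-orthonormal matrix. -/
theorem frobSq_mul_transpose_le {p n r : ℕ} (A : Matrix (Fin p) (Fin n) ℝ)
    (X : Matrix (Fin r) (Fin n) ℝ) (hX : X * Xᵀ = 1) :
    frobSq (A * Xᵀ) ≤ frobSq A := by
  have := frobSq_nonneg (A - A * Xᵀ * X)
  rw [frobSq_sub_proj A X hX] at this
  linarith

theorem frobSq_of_mul_transpose_eq_one {r n : ℕ} (X : Matrix (Fin r) (Fin n) ℝ)
    (hX : X * Xᵀ = 1) : frobSq X = r := by
  simp [frobSq_eq_trace, hX]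

/-- Left multiplication by a column-orthonormal matrix preserves the Frobenius norm. -/
theorem frobSq_mul_left {p m n : ℕ} (U : Matrix (Fin p) (Fin m) ℝ) (hU : Uᵀ * U = 1)
    (M : Matrix (Fin m) (Fin n) ℝ) : frobSq (U * M) = frobSq M := by
  rw [← frobSq_transpose, ← frobSq_transpose M, frobSq_eq_trace, frobSq_eq_trace]
  congr 1
  simp only [Matrix.transpose_mul, Matrix.transpose_transpose, Matrix.mul_assoc]
  rw [← Matrix.mul_assoc Uᵀ, hU, Matrix.one_mul]

theorem frobSq_diagonal_mul {m n : ℕ} (σ : Fin m → ℝ) (M : Matrix (Fin m) (Fin n) ℝ) :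
    frobSq (Matrix.diagonal σ * M) = ∑ i, σ i ^ 2 * ∑ k, M i k ^ 2 := by
  simp [frobSq, Matrix.diagonal_mul, mul_pow, Finset.mul_sum]

/-- A weighted sum with descending weights, and coefficients in `[0, 1]` of total mass at most `r`,
is at most the sum of the first `r` weights. -/
theorem sum_mul_le_sum_castLE {m r : ℕ} (hr : r ≤ m) (s c : Fin m → ℝ)
    (hs : ∀ i, 0 ≤ s i) (hdesc : Antitone s) (hc0 : ∀ i, 0 ≤ c i) (hc1 : ∀ i, c i ≤ 1)
    (hc : ∑ i, c i ≤ r) :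
    ∑ i, s i * c i ≤ ∑ k : Fin r, s (Fin.castLE hr k) := by
  obtain ⟨t, ht, htop, hbot⟩ : ∃ t : ℝ, 0 ≤ t ∧ (∀ i : Fin m, i.val < r → t ≤ s i) ∧
      ∀ i : Fin m, r ≤ i.val → s i ≤ t := by
    rcases Nat.eq_zero_or_pos r with h0 | hpos
    · exact ⟨∑ i, s i, Finset.sum_nonneg fun i _ => hs i, fun i hi => by omega,
        fun i _ => Finset.single_le_sum (fun j _ => hs j) (Finset.mem_univ i)⟩
    · refine ⟨s ⟨r - 1, by omega⟩, hs _, fun i hi => hdesc ?_, fun i hi => hdesc ?_⟩ <;>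
        rw [Fin.le_def] <;> dsimp only <;> omega
  obtain ⟨d, rfl⟩ := Nat.exists_eq_add_of_le hr
  rw [Fin.sum_univ_add] at hc ⊢
  have h1 : ∑ k : Fin r, s (Fin.castAdd d k) * c (Fin.castAdd d k) ≤
      ∑ k : Fin r, (s (Fin.castAdd d k) - t + t * c (Fin.castAdd d k)) :=
    Finset.sum_le_sum fun k _ => by
      nlinarith [htop (Fin.castAdd d k) (by simp), hc1 (Fin.castAdd d k)]
  have h2 : ∑ k : Fin d, s (Fin.natAdd r k) * c (Fin.natAdd r k) ≤
      ∑ k : Fin d, t * c (Fin.natAdd r k) :=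
    Finset.sum_le_sum fun k _ =>
      mul_le_mul_of_nonneg_right (hbot (Fin.natAdd r k) (by simp)) (hc0 _)
  rw [Finset.sum_add_distrib, Finset.sum_sub_distrib, ← Finset.mul_sum] at h1
  rw [← Finset.mul_sum] at h2
  simp only [Finset.sum_const, Finset.card_univ, Fintype.card_fin, nsmul_eq_mul] at h1
  have h3 := mul_le_mul_of_nonneg_left hc ht
  have h4 : ∑ k : Fin r, s (Fin.castLE hr k) = ∑ k : Fin r, s (Fin.castAdd d k) := rfl
  linarith

/-- Eckart–Young, subspace form: with compact SVD `A = U Σ V`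
(singular values positive and descending), among all row-orthonormal
`X ∈ ℝ^{r×n}` (`r ≤ rank A = m`), `‖A − A Xᵀ X‖_F²` is minimized by taking `X`
to be the top `r` right singular vectors `V_{1:r}`. -/
theorem eckart_young_subspace
    (p n m r : ℕ) (hr : r ≤ m)
    (A : Matrix (Fin p) (Fin n) ℝ)
    (U : Matrix (Fin p) (Fin m) ℝ) (σ : Fin m → ℝ)
    (V : Matrix (Fin m) (Fin n) ℝ)
    (hA : A = U * Matrix.diagonal σ * V)
    (hU : Uᵀ * U = 1) (hV : V * Vᵀ = 1)
    (hσpos : ∀ i, 0 < σ i) (hσdesc : ∀ i j : Fin m, i ≤ j → σ j ≤ σ i)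
    (Vr : Matrix (Fin r) (Fin n) ℝ)
    (hVr : Vr = V.submatrix (Fin.castLE hr) id) :
    ∀ X : Matrix (Fin r) (Fin n) ℝ, X * Xᵀ = 1 →
      frobSq (A - A * Vrᵀ * Vr) ≤ frobSq (A - A * Xᵀ * X) := by
  intro X hX
  have hVVr : V * Vrᵀ = (1 : Matrix (Fin m) (Fin m) ℝ).submatrix id (Fin.castLE hr) := by
    rw [← hV, hVr]; rfl
  have hVrVr : Vr * Vrᵀ = 1 := by
    have h : Vr * Vrᵀ = (V * Vᵀ).submatrix (Fin.castLE hr) (Fin.castLE hr) := by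
      rw [hVr]; rfl
    rw [h, hV, Matrix.submatrix_one _ (Fin.castLE_injective hr)]
  have key (Y : Matrix (Fin r) (Fin n) ℝ) :
      frobSq (A * Yᵀ) = ∑ i, σ i ^ 2 * ∑ k, (V * Yᵀ) i k ^ 2 := by
    rw [hA, Matrix.mul_assoc, Matrix.mul_assoc, frobSq_mul_left U hU, frobSq_diagonal_mul]
  rw [frobSq_sub_proj A Vr hVrVr, frobSq_sub_proj A X hX, key Vr, key X]
  have hopt : ∑ i, σ i ^ 2 * ∑ k, (V * Vrᵀ) i k ^ 2 = ∑ k : Fin r, σ (Fin.castLE hr k) ^ 2 := by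
    simp only [hVVr, Finset.mul_sum]
    rw [Finset.sum_comm]
    simp [Matrix.one_apply]
  have hrow (i : Fin m) : ∑ k, (V * Xᵀ) i k ^ 2 ≤ 1 := by
    have h := frobSq_mul_transpose_le (V.submatrix (fun _ : Fin 1 => i) id) X hX
    rw [frobSq_of_mul_transpose_eq_one (V.submatrix (fun _ : Fin 1 => i) id)] at h
    · simpa [frobSq, Matrix.mul_apply] using h
    · have h' : V.submatrix (fun _ : Fin 1 => i) id * (V.submatrix (fun _ : Fin 1 => i) id)ᵀ =
          (V * Vᵀ).submatrix (fun _ => i) (fun _ => i) := rfl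
      rw [h', hV, Matrix.submatrix_one _ (Function.injective_of_subsingleton _)]
  have hmass : ∑ i, ∑ k, (V * Xᵀ) i k ^ 2 ≤ r := by
    have h := frobSq_mul_transpose_le X V hV
    rw [frobSq_of_mul_transpose_eq_one X hX, ← frobSq_transpose, Matrix.transpose_mul,
      Matrix.transpose_transpose] at h
    exact h
  rw [hopt]
  have := sum_mul_le_sum_castLE hr (fun i => σ i ^ 2) (fun i => ∑ k, (V * Xᵀ) i k ^ 2)
    (fun i => sq_nonneg _) (fun i j hij => pow_le_pow_left₀ (hσpos j).le (hσdesc i j hij) 2)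
    (fun i => Finset.sum_nonneg fun k _ => sq_nonneg _) hrow hmass
  linarith
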